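/- Let n ≥ 1 and let T be an n-periodic 2-triangulation on ℤ. Consider the set of 2-stars all five of whose edges lie in T. This set is invariant under translation by n (a 2-star with vertices z₀<⋯<z₄ translates to the 2-star with vertices z₀+n<⋯<z₄+n), and the number of its orbits under translation by n is exactly n−1. -/

import Mathlib

/- Edges on the universal cover of the half-cylinder, modeled by the integers.
   An edge is an unordered pair of distinct integers, represented as an ordered
   pair `(a, b)` with `a < b` (validity). -/

namespace Multitriangulation

abbrev Edge := ℤ × ℤ

/-- Translate an edge by `t`: `[a,b] + t = [a+t, b+t]`. -/
def shift (e : Edge) (t : ℤ) : Edge := (e.1 + t, e.2 + t)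

/-- Two edges (as unordered pairs of integers) cross:
their endpoints strictly interleave. -/
def Crosses (e f : Edge) : Prop :=
  (min e.1 e.2 < min f.1 f.2 ∧ min f.1 f.2 < max e.1 e.2 ∧ max e.1 e.2 < max f.1 f.2) ∨
  (min f.1 f.2 < min e.1 e.2 ∧ min e.1 e.2 < max f.1 f.2 ∧ max f.1 f.2 < max e.1 e.2)

/-- A finite set of edges is an `l`-crossing if it consists of `l` pairwise
crossing edges. -/
def IsCrossing (l : ℕ) (S : Finset Edge) : Prop :=
  S.card = l ∧ ∀ e ∈ S, ∀ f ∈ S, e ≠ f → Crosses e f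

/-- A set of edges is `l`-crossing-free if no `l` of its edges pairwise cross. -/
def CrossingFree (l : ℕ) (E : Set Edge) : Prop :=
  ¬ ∃ S : Finset Edge, ↑S ⊆ E ∧ IsCrossing l S

/-- A set of edges is `n`-periodic if `e ∈ E ↔ e + n ∈ E`. -/
def Periodic (n : ℕ) (E : Set Edge) : Prop := ∀ e, e ∈ E ↔ shift e (n : ℤ) ∈ E

/-- All members are genuine edges `[a,b]` with `a < b`. -/
def ValidEdges (E : Set Edge) : Prop := ∀ e ∈ E, e.1 < e.2

/-- An `n`-periodic `k`-triangulation on `ℤ`: an `n`-periodic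
`(k+1)`-crossing-free set of edges that is maximal under inclusion among
`n`-periodic `(k+1)`-crossing-free sets of edges. -/
def IsTriangulation (n k : ℕ) (T : Set Edge) : Prop :=
  ValidEdges T ∧ Periodic n T ∧ CrossingFree (k+1) T ∧
  ∀ T', ValidEdges T' → Periodic n T' → CrossingFree (k+1) T' → T ⊆ T' → T' = T

/-- The cyclic order relation on integers: `cyc a b c` iff
`a<b<c` or `b<c<a` or `c<a<b`. -/
def cyc (a b c : ℤ) : Prop := (a < b ∧ b < c) ∨ (b < c ∧ c < a) ∨ (c < a ∧ a < b)

/-- Membership of the unordered edge `[a,b]` in an edge set. -/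
def EdgeMem (T : Set Edge) (a b : ℤ) : Prop := (a, b) ∈ T ∨ (b, a) ∈ T

/-- `∠(u,v,w)` is an angle of `T`: the edges `[u,v],[v,w]` lie in `T`,
`cyc u v w`, and `T` has no edge `[v,w₀]` with `w₀ ≺ u ≺ v ≺ w` in cyclic
order. -/
def IsAngle (T : Set Edge) (u v w : ℤ) : Prop :=
  EdgeMem T u v ∧ EdgeMem T v w ∧ cyc u v w ∧
  ¬ ∃ w₀ : ℤ, EdgeMem T v w₀ ∧ cyc w₀ u v ∧ cyc w₀ v w

/-- The set of 2-stars all five of whose edges lie in `T`: a 2-star is given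
by strictly increasing vertices `z 0 < ⋯ < z 4` with edges `[z i, z (i+2)]`
(indices mod 5). -/
def StarsIn (T : Set Edge) : Set (Fin 5 → ℤ) :=
  {z | StrictMono z ∧ ∀ i : Fin 5, EdgeMem T (z i) (z (i + 2))}

/-- The orbit of a 2-star under translation by multiples of `n`. -/
def starOrbit (n : ℕ) (z : Fin 5 → ℤ) : Set (Fin 5 → ℤ) :=
  {w | ∃ t : ℤ, w = fun i => z i + t * n}

/-!
By maximality `T` contains every edge whose translates by multiples of `n` can be added without
creating a 3-crossing. Hence `T` contains a long edge `[p, p + 2n]`, where `p` is a point that does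
not lie under two crossing edges of `T`.

Each integer `v` is the middle vertex of at most one star of `T`: its outer vertices must be the
extreme neighbours of `v`, and its inner vertices the ends of the outermost edge above `v` strictly
between them. For `p < v < p + n` the two remaining edges of this candidate can be added, so they
lie in `T` and the star exists; the translates of `p` are the middle vertex of no star, as a star
around `p` would have two edges forming a 3-crossing with `[p - 2n, p]`. Taking middle vertices
modulo `n` thus identifies the orbits of stars with the `n - 1` residues different from that of `p`.
-/

variable {n k l : ℕ} {E T : Set Edge}

/-! ### Translations, reflection and lengths of edges -/

theorem Periodic.add_mul_mem {e : Edge} (hE : Periodic n E) (he : e ∈ E) (t : ℤ) :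
    (e.1 + t * n, e.2 + t * n) ∈ E := by
  induction t using Int.induction_on with
  | zero => simpa using he
  | succ i ih =>
    have := (hE _).1 ih
    simp only [shift] at this
    convert this using 2 <;> ring
  | pred i ih =>
    rw [hE]
    simp only [shift]
    convert ih using 2 <;> ring

/-- The orbit of an edge under translation by multiples of `n`. -/
def edgeOrbit (n : ℕ) (e : Edge) : Set Edge :=
  {f | ∃ t : ℤ, f = (e.1 + t * n, e.2 + t * n)}

theorem periodic_edgeOrbit (n : ℕ) (e : Edge) : Periodic n (edgeOrbit n e) := by
  refine fun f => ⟨?_, ?_⟩ <;> rintro ⟨t, ht⟩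
  · refine ⟨t + 1, ?_⟩
    simp only [ht, shift, Prod.mk.injEq]
    constructor <;> ring
  · refine ⟨t - 1, ?_⟩
    simp only [shift, Prod.mk.injEq] at ht
    ext <;> simp only <;> linarith

theorem IsTriangulation.mem_of_crossingFree_union {e : Edge} (hT : IsTriangulation n k T)
    (he : e.1 < e.2) (hfree : CrossingFree (k + 1) (T ∪ edgeOrbit n e)) : e ∈ T := by
  obtain ⟨hvalid, hper, -, hmax⟩ := hT
  have hvalid' : ValidEdges (T ∪ edgeOrbit n e) := by
    rintro f (hf | ⟨t, rfl⟩)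
    · exact hvalid f hf
    · simpa using he
  have hper' : Periodic n (T ∪ edgeOrbit n e) := fun f =>
    or_congr (hper f) (periodic_edgeOrbit n e f)
  rw [← hmax _ hvalid' hper' hfree Set.subset_union_left]
  exact Or.inr ⟨0, by simp⟩

/-- The mirror image `[-b, -a]` of the edge `[a, b]`. Reflecting a triangulation exchanges the
roles of left and right endpoints. -/
def reflect (e : Edge) : Edge := (-e.2, -e.1)

theorem reflect_involutive : Function.Involutive reflect := fun _ => by simp [reflect]

theorem crosses_reflect_iff (e f : Edge) : Crosses (reflect e) (reflect f) ↔ Crosses e f := by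
  simp only [Crosses, reflect]
  omega

theorem IsCrossing.image_reflect {S : Finset Edge} (hS : IsCrossing l S) :
    IsCrossing l (S.image reflect) := by
  refine ⟨by rw [Finset.card_image_of_injective _ reflect_involutive.injective, hS.1], ?_⟩
  simp only [Finset.forall_mem_image]
  exact fun e he f hf hne => (crosses_reflect_iff e f).2 (hS.2 e he f hf (ne_of_apply_ne _ hne))

theorem CrossingFree.preimage_reflect (hE : CrossingFree l E) :
    CrossingFree l (reflect ⁻¹' E) := by
  rintro ⟨S, hSE, hS⟩
  exact hE ⟨S.image reflect, by rwa [Finset.coe_image, Set.image_subset_iff], hS.image_reflect⟩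

theorem ValidEdges.preimage_reflect (hE : ValidEdges E) : ValidEdges (reflect ⁻¹' E) :=
  fun _ he => neg_lt_neg_iff.1 (hE _ he)

theorem Periodic.preimage_reflect (hE : Periodic n E) : Periodic n (reflect ⁻¹' E) := by
  intro e
  have hshift : shift (reflect (shift e n)) n = reflect e := by simp [shift, reflect]
  rw [Set.mem_preimage, Set.mem_preimage, hE (reflect (shift e n)), hshift]

theorem IsTriangulation.preimage_reflect (hT : IsTriangulation n k T) :
    IsTriangulation n k (reflect ⁻¹' T) := by
  obtain ⟨hvalid, hper, hfree, hmax⟩ := hT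
  have hinv : ∀ E : Set Edge, reflect ⁻¹' (reflect ⁻¹' E) = E := reflect_involutive.preimage
  refine ⟨hvalid.preimage_reflect, hper.preimage_reflect, hfree.preimage_reflect, ?_⟩
  intro T' hvalid' hper' hfree' hsub
  have hsub' : T ⊆ reflect ⁻¹' T' := by
    rw [← hinv T]
    exact Set.preimage_mono hsub
  rw [← hinv T', hmax _ hvalid'.preimage_reflect hper'.preimage_reflect
    hfree'.preimage_reflect hsub']

/-- Otherwise `e, e + n, …, e + k n` pairwise cross. -/
theorem CrossingFree.length_le_mul {e : Edge} (hfree : CrossingFree (k + 1) E)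
    (hper : Periodic n E) (hn : 1 ≤ n) (he : e ∈ E) : e.2 - e.1 ≤ k * n := by
  by_contra! hlong
  let translate : ℕ → Edge := fun i => (e.1 + (i : ℤ) * n, e.2 + (i : ℤ) * n)
  have hcross : ∀ i j : ℕ, i < j → j ≤ k → Crosses (translate i) (translate j) := by
    intro i j hij hjk
    have hlt : (i : ℤ) * n < j * n := by exact_mod_cast Nat.mul_lt_mul_of_pos_right hij hn
    have hle : (j : ℤ) * n ≤ k * n := by exact_mod_cast Nat.mul_le_mul_right n hjk
    have : 0 ≤ (i : ℤ) * n := by positivity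
    simp only [Crosses, translate]
    omega
  have hinj : Function.Injective translate := by
    intro i j hij
    have : (i : ℤ) * n = j * n := by simpa [translate] using congrArg Prod.fst hij
    exact Nat.eq_of_mul_eq_mul_right hn (by exact_mod_cast this)
  refine hfree ⟨(Finset.range (k + 1)).image translate, ?_, ?_, ?_⟩
  · rw [Finset.coe_image, Set.image_subset_iff]
    exact fun i _ => hper.add_mul_mem he i
  · rw [Finset.card_image_of_injective _ hinj, Finset.card_range]
  · simp only [Finset.forall_mem_image, Finset.mem_range]
    intro i hi j hj hne
    rcases lt_trichotomy i j with hij | rfl | hij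
    · exact hcross i j hij (by omega)
    · exact absurd rfl hne
    · exact (hcross j i hij (by omega)).symm

/-- The endpoints strictly inside `[a, b]` of the other edges of the crossing are distinct. -/
theorem IsCrossing.le_length {S : Finset Edge} {a b : ℤ} (hS : IsCrossing l S) (hab : a < b)
    (hmem : (a, b) ∈ S) : l ≤ b - a := by
  let inner : Edge → ℤ := fun f => if a < f.1 ∧ f.1 < b then f.1 else f.2
  have hinner : Set.MapsTo inner ↑(S.erase (a, b)) ↑(Finset.Ioo a b) := by
    intro f hf
    obtain ⟨hne, hf⟩ := Finset.mem_erase.1 hf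
    have := hS.2 _ hmem f hf hne.symm
    simp only [Crosses] at this
    simp only [inner, Finset.coe_Ioo, Set.mem_Ioo]
    split_ifs <;> omega
  have hinj : Set.InjOn inner ↑(S.erase (a, b)) := by
    intro f hf g hg hfg
    by_contra hne
    have := hS.2 f (Finset.mem_of_mem_erase hf) g (Finset.mem_of_mem_erase hg) hne
    simp only [Crosses] at this
    simp only [inner] at hfg
    split_ifs at hfg <;> omega
  have hcard := Finset.card_le_card_of_injOn inner hinner hinj
  rw [Finset.card_erase_of_mem hmem, hS.1, Int.card_Ioo] at hcard
  omega

theorem IsTriangulation.mem_of_length_le {a b : ℤ} (hT : IsTriangulation n k T) (hab : a < b)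
    (hlen : b - a ≤ k) : (a, b) ∈ T := by
  refine hT.mem_of_crossingFree_union hab ?_
  rintro ⟨S, hST, hS⟩
  by_cases hsub : ↑S ⊆ T
  · exact hT.2.2.1 ⟨S, hsub, hS⟩
  · obtain ⟨f, hfS, hfT⟩ := Set.not_subset.1 hsub
    obtain ⟨t, rfl⟩ := (hST hfS).resolve_left hfT
    have := hS.le_length (by simpa using hab) hfS
    push_cast at this
    omega

/-! ### Crossing triples -/

theorem IsTriangulation.crossingFree_three (hT : IsTriangulation n 2 T) : CrossingFree 3 T :=
  hT.2.2.1

/-- The edges `e`, `f`, `g` form a 3-crossing and are listed by increasing left endpoints. -/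
abbrev TripleCrossing (e f g : Edge) : Prop :=
  e.1 < f.1 ∧ f.1 < g.1 ∧ g.1 < e.2 ∧ e.2 < f.2 ∧ f.2 < g.2

theorem CrossingFree.not_tripleCrossing {e f g : Edge} (hE : CrossingFree 3 E) (he : e ∈ E)
    (hf : f ∈ E) (hg : g ∈ E) : ¬ TripleCrossing e f g := by
  intro h
  refine hE ⟨{e, f, g}, ?_, Finset.card_eq_three.2 ⟨e, f, g, ?_, ?_, ?_, rfl⟩, ?_⟩
  · simp [Set.insert_subset_iff, he, hf, hg]
  · rintro rfl
    omega
  · rintro rfl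
    omega
  · rintro rfl
    omega
  · simp only [Finset.mem_insert, Finset.mem_singleton, Crosses]
    rintro x (rfl | rfl | rfl) y (rfl | rfl | rfl) hne <;>
      first
      | exact absurd rfl hne
      | omega

theorem crosses_iff_of_lt {e f : Edge} (he : e.1 < e.2) (hf : f.1 < f.2) :
    Crosses e f ↔
      (e.1 < f.1 ∧ f.1 < e.2 ∧ e.2 < f.2) ∨ (f.1 < e.1 ∧ e.1 < f.2 ∧ f.2 < e.2) := by
  rw [Crosses, min_eq_left he.le, max_eq_right he.le, min_eq_left hf.le, max_eq_right hf.le]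

theorem crossingFree_three_iff (hE : ValidEdges E) :
    CrossingFree 3 E ↔ ∀ e ∈ E, ∀ f ∈ E, ∀ g ∈ E, ¬ TripleCrossing e f g := by
  refine ⟨fun h e he f hf g hg => h.not_tripleCrossing he hf hg, ?_⟩
  rintro h ⟨S, hSE, hcard, hcross⟩
  obtain ⟨e, f, g, hef, heg, hfg, rfl⟩ := Finset.card_eq_three.1 hcard
  have he : e ∈ E := hSE (by simp)
  have hf : f ∈ E := hSE (by simp)
  have hg : g ∈ E := hSE (by simp)
  have cef := (crosses_iff_of_lt (hE e he) (hE f hf)).1 (hcross e (by simp) f (by simp) hef)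
  have ceg := (crosses_iff_of_lt (hE e he) (hE g hg)).1 (hcross e (by simp) g (by simp) heg)
  have cfg := (crosses_iff_of_lt (hE f hf) (hE g hg)).1 (hcross f (by simp) g (by simp) hfg)
  rcases cef with _ | _ <;> rcases ceg with _ | _ <;> rcases cfg with _ | _ <;>
    first
    | omega
    | exact h e he f hf g hg (by omega)
    | exact h e he g hg f hf (by omega)
    | exact h f hf e he g hg (by omega)
    | exact h f hf g hg e he (by omega)
    | exact h g hg e he f hf (by omega)
    | exact h g hg f hf e he (by omega)

/-- No two edges of `T` form a 3-crossing with `e`; the three clauses correspond to the position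
of the left endpoint of `e`. -/
def Compatible (T : Set Edge) (e : Edge) : Prop :=
  ∀ f ∈ T, ∀ g ∈ T,
    ¬ TripleCrossing e f g ∧ ¬ TripleCrossing f e g ∧ ¬ TripleCrossing f g e

theorem eq_add_one_of_translates_cross {a b t s : ℤ} (hlen : b - a ≤ 2 * n)
    (hlt : a + t * n < a + s * n) (hcross : a + s * n < b + t * n) : s = t + 1 := by
  have hpos : 0 < (s - t) * (n : ℤ) := by linarith
  have hlt2 : (s - t) * (n : ℤ) < 2 * n := by linarith
  have : 0 < s - t := pos_of_mul_pos_left hpos (by positivity)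
  have : s - t < 2 := lt_of_mul_lt_mul_right hlt2 (by positivity)
  omega

/-- Among translates of an edge of length at most `2n`, only those differing by `n` cross, so a
3-crossing contains one translate or two consecutive ones. -/
theorem IsTriangulation.mem_of_compatible {a b : ℤ} (hT : IsTriangulation n 2 T) (hab : a < b)
    (hlen : b - a ≤ 2 * n) (hcomp : Compatible T (a, b))
    (htranslate : ∀ f ∈ T, ¬ TripleCrossing (a, b) f (a + n, b + n) ∧
      ¬ TripleCrossing f (a, b) (a + n, b + n) ∧ ¬ TripleCrossing (a, b) (a + n, b + n) f) :
    (a, b) ∈ T := by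
  have hback : ∀ f ∈ T, ∀ t : ℤ, (f.1 - t * n, f.2 - t * n) ∈ T := fun f hf t => by
    simpa only [neg_mul, ← sub_eq_add_neg] using hT.2.1.add_mul_mem hf (-t)
  have hnext : ∀ {t s : ℤ}, a + t * n < a + s * n → a + s * n < b + t * n → s = t + 1 :=
    eq_add_one_of_translates_cross hlen
  have hvalid : ValidEdges (T ∪ edgeOrbit n (a, b)) := by
    rintro f (hf | ⟨t, rfl⟩)
    · exact hT.1 f hf
    · simpa using hab
  refine hT.mem_of_crossingFree_union hab ((crossingFree_three_iff hvalid).2 ?_)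
  rintro e (he | ⟨r, rfl⟩) f (hf | ⟨s, rfl⟩) g (hg | ⟨t, rfl⟩) h
  · exact hT.crossingFree_three.not_tripleCrossing he hf hg h
  · exact (hcomp _ (hback e he t) _ (hback f hf t)).2.2 (by omega)
  · exact (hcomp _ (hback e he s) _ (hback g hg s)).2.1 (by omega)
  · obtain rfl := hnext (t := s) (s := t) (by omega) (by omega)
    exact (htranslate _ (hback e he s)).2.1 (by simp only [add_mul] at h; omega)
  · exact (hcomp _ (hback f hf r) _ (hback g hg r)).1 (by omega)
  · obtain rfl := hnext (t := r) (s := t) (by omega) (by omega)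
    exact (htranslate _ (hback f hf r)).1 (by simp only [add_mul] at h; omega)
  · obtain rfl := hnext (t := r) (s := s) (by omega) (by omega)
    exact (htranslate _ (hback g hg r)).2.2 (by simp only [add_mul] at h; omega)
  · have := hnext (t := r) (s := s) (by omega) (by omega)
    have := hnext (t := s) (s := t) (by omega) (by omega)
    have := hnext (t := r) (s := t) (by omega) (by omega)
    omega

/-! ### A long edge -/

theorem exists_longest {A : Set Edge} {L : ℤ} (hA : A.Nonempty)
    (hlen : ∀ e ∈ A, e.2 - e.1 ≤ L) : ∃ e ∈ A, ∀ f ∈ A, f.2 - f.1 ≤ e.2 - e.1 := by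
  have hbdd : BddAbove ((fun e : Edge => e.2 - e.1) '' A) := ⟨L, Set.forall_mem_image.2 hlen⟩
  obtain ⟨_, ⟨e, he, rfl⟩, hmax⟩ := hbdd.exists_isGreatest_of_nonempty (hA.image _)
  exact ⟨e, he, fun f hf => hmax ⟨f, hf, rfl⟩⟩

/-- The pairs `(b, c)` arising from two crossing edges `[a, c]` and `[b, d]` of `T` with
`a < b < c < d`: the integers strictly between `b` and `c` are those covered by both edges. -/
def crossingCores (T : Set Edge) : Set Edge :=
  {e | e.1 < e.2 ∧ ∃ a d, a < e.1 ∧ e.2 < d ∧ (a, e.2) ∈ T ∧ (e.1, d) ∈ T}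

/-- The integer `p` does not lie under two crossing edges of `T`. -/
def Uncovered (T : Set Edge) (p : ℤ) : Prop :=
  ∀ e ∈ crossingCores T, ¬ (e.1 < p ∧ p < e.2)

theorem Uncovered.le_of_lt {p a b c d : ℤ} (hp : Uncovered T p) (hac : (a, c) ∈ T)
    (hbd : (b, d) ∈ T) (hab : a < b) (hcd : c < d) (hbp : b < p) : c ≤ p := by
  by_contra! hpc
  exact hp (b, c) ⟨hbp.trans hpc, a, d, hab, hcd, hac, hbd⟩ ⟨hbp, hpc⟩

theorem Uncovered.add_mul {p : ℤ} (hp : Uncovered T p) (hT : Periodic n T) (t : ℤ) :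
    Uncovered T (p + t * n) := by
  rintro ⟨b, c⟩ ⟨-, a, d, hab, hcd, hac, hbd⟩ hbc
  have := hp.le_of_lt (hT.add_mul_mem hac (-t)) (hT.add_mul_mem hbd (-t))
  simp only [neg_mul] at *
  omega

/-- An edge covering both `p` and `p + n` crosses its translate by `-n` above `p`. -/
theorem Uncovered.le_add_of_lt {p x y : ℤ} (hp : Uncovered T p) (hT : Periodic n T) (hn : 1 ≤ n)
    (hxy : (x, y) ∈ T) (hx : x < p) : y ≤ p + n := by
  have := hp.le_of_lt (hT.add_mul_mem hxy (-1)) hxy (by omega) (by omega) hx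
  omega

/-- If every integer were covered, a longest core `[b, c]` would admit a core `[b', c']` around its
right end `c`; the edges involved then form a 3-crossing or a longer core. -/
theorem exists_uncovered {L : ℤ} (hfree : CrossingFree 3 T) (hlen : ∀ e ∈ T, e.2 - e.1 ≤ L) :
    ∃ p, Uncovered T p := by
  simp only [Uncovered]
  by_contra! hcover
  have hlen_core : ∀ e ∈ crossingCores T, e.2 - e.1 ≤ L := by
    rintro e ⟨-, a, d, ha, -, hmem, -⟩
    have := hlen _ hmem
    omega
  obtain ⟨e₀, he₀, -⟩ := hcover 0
  obtain ⟨⟨b, c⟩, ⟨_, a, d, hab, hcd, hac, hbd⟩, hmax⟩ := exists_longest ⟨e₀, he₀⟩ hlen_core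
  obtain ⟨⟨b', c'⟩, hcore', hb'c, hcc'⟩ := hcover c
  have hb' : b < b' := by
    have := hmax _ hcore'
    omega
  obtain ⟨-, a', d', ha'b', hc'd', ha'c', hb'd'⟩ := hcore'
  have ha' : a' ≤ a := by
    by_contra! hlt
    exact hfree.not_tripleCrossing hac ha'c' hb'd' (by omega)
  have hd : d ≤ c' := by
    by_contra! hlt
    have := hmax (b, c') ⟨by omega, a', d, by omega, hlt, ha'c', hbd⟩
    omega
  exact hfree.not_tripleCrossing hac hbd hb'd' (by omega)

theorem IsTriangulation.length_le_two_mul {x y : ℤ} (hT : IsTriangulation n 2 T) (hn : 1 ≤ n)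
    (hxy : (x, y) ∈ T) : y - x ≤ 2 * n := by
  exact_mod_cast CrossingFree.length_le_mul hT.2.2.1 hT.2.1 hn hxy

theorem IsTriangulation.exists_long_edge (hT : IsTriangulation n 2 T) (hn : 1 ≤ n) :
    ∃ p : ℤ, (p, p + 2 * n) ∈ T := by
  obtain ⟨p, hp⟩ :=
    exists_uncovered hT.crossingFree_three fun e he => hT.length_le_two_mul (x := e.1) hn he
  have hper := hT.2.1
  refine ⟨p, hT.mem_of_compatible (by omega) (by omega) ?_ ?_⟩
  · rintro ⟨x, y⟩ hf ⟨x', y'⟩ hg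
    refine ⟨?_, ?_, ?_⟩ <;> intro h
    · have := (hp.add_mul hper 2).le_of_lt hf hg
      omega
    · have := hT.length_le_two_mul hn hf
      have := hT.length_le_two_mul hn hg
      have := hp.le_of_lt (hper.add_mul_mem hg (-2)) hf
      omega
    · have := hp.le_of_lt hf hg
      omega
  · rintro ⟨x, y⟩ hf
    refine ⟨?_, ?_, ?_⟩ <;> intro h
    · have := (hp.add_mul hper 1).le_add_of_lt hper hn hf
      omega
    · have := hp.le_add_of_lt hper hn hf
      omega
    · have := (hp.add_mul hper 2).le_add_of_lt hper hn hf
      omega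

/-! ### The star around a vertex -/

/-- The only possible star of a 3-crossing-free set `T` with middle vertex `v`: its outer vertices
are the extreme neighbours `u` and `w` of `v`, its inner vertices the ends of the outermost edge
`[a, b]` above `v` strictly between them. Its edges `[u, b]` and `[a, w]` are not required. -/
structure IsStarCandidate (T : Set Edge) (u a v b w : ℤ) : Prop where
  isLeast_left : IsLeast {x | (x, v) ∈ T} u
  isGreatest_right : IsGreatest {x | (v, x) ∈ T} w
  inner_mem : (a, b) ∈ T
  ordered : u < a ∧ a < v ∧ v < b ∧ b < w
  outermost : ∀ {c d}, (c, d) ∈ T → u < c → c < v → v < d → d < w → a ≤ c ∧ d ≤ b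

theorem IsTriangulation.exists_isStarCandidate (hT : IsTriangulation n 2 T) (hn : 1 ≤ n) (v : ℤ) :
    ∃ u a b w, IsStarCandidate T u a v b w := by
  have hfree := hT.crossingFree_three
  have hshort : ∀ x : ℤ, (x, x + 2) ∈ T := fun x =>
    hT.mem_of_length_le (by omega) (by push_cast; omega)
  have hleft : v - 2 ∈ {x | (x, v) ∈ T} := by simpa using hshort (v - 2)
  have hright : v + 2 ∈ {x | (v, x) ∈ T} := hshort v
  obtain ⟨u, hu⟩ : ∃ u, IsLeast {x | (x, v) ∈ T} u :=
    BddBelow.exists_isLeast_of_nonempty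
      ⟨v - 2 * n, fun x hx => by have := hT.length_le_two_mul hn hx; omega⟩ ⟨_, hleft⟩
  obtain ⟨w, hw⟩ : ∃ w, IsGreatest {x | (v, x) ∈ T} w :=
    BddAbove.exists_isGreatest_of_nonempty
      ⟨v + 2 * n, fun x hx => by have := hT.length_le_two_mul hn hx; omega⟩ ⟨_, hright⟩
  have := hu.2 hleft
  have := hw.2 hright
  have hne : {e ∈ T | u < e.1 ∧ e.1 < v ∧ v < e.2 ∧ e.2 < w}.Nonempty :=
    ⟨(v - 1, v - 1 + 2), hshort (v - 1), by omega⟩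
  obtain ⟨⟨a, b⟩, ⟨hab, hua, hav, hvb, hbw⟩, hmax⟩ :=
    exists_longest hne fun e he => hT.length_le_two_mul (x := e.1) hn he.1
  refine ⟨u, a, b, w, hu, hw, hab, ⟨hua, hav, hvb, hbw⟩, ?_⟩
  intro c d hcd huc hcv hvd hdw
  have := hmax (c, d) ⟨hcd, huc, hcv, hvd, hdw⟩
  have := hfree.not_tripleCrossing hab hcd hw.1
  have := hfree.not_tripleCrossing hcd hab hw.1
  omega

namespace IsStarCandidate

variable {u a v b w x y : ℤ}

theorem preimage_reflect (h : IsStarCandidate T u a v b w) :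
    IsStarCandidate (reflect ⁻¹' T) (-w) (-b) (-v) (-a) (-u) where
  isLeast_left := by
    refine ⟨by simpa [reflect] using h.isGreatest_right.1, fun x hx => ?_⟩
    exact neg_le.1 (h.isGreatest_right.2 (by simpa [reflect] using hx))
  isGreatest_right := by
    refine ⟨by simpa [reflect] using h.isLeast_left.1, fun x hx => ?_⟩
    exact le_neg.1 (h.isLeast_left.2 (by simpa [reflect] using hx))
  inner_mem := by simpa [reflect] using h.inner_mem
  ordered := by
    have := h.ordered
    omega
  outermost := fun hcd _ _ _ _ => by
    have := h.outermost hcd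
    omega

theorem le_of_lt_left (h : IsStarCandidate T u a v b w) (hfree : CrossingFree 3 T)
    (hxy : (x, y) ∈ T) (hx : x < u) (hy : v ≤ y) : b ≤ y := by
  by_contra! hyb
  rcases hy.eq_or_lt with rfl | hvy
  · exact (h.isLeast_left.2 hxy).not_gt hx
  · have := hfree.not_tripleCrossing hxy h.inner_mem h.isGreatest_right.1
    have := h.ordered
    omega

theorem compatible_left (h : IsStarCandidate T u a v b w) (hfree : CrossingFree 3 T) :
    Compatible T (u, b) := by
  have huv := h.isLeast_left.1
  have hvw := h.isGreatest_right.1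
  have := h.ordered
  rintro ⟨x, y⟩ hf ⟨x', y'⟩ hg
  refine ⟨?_, ?_, ?_⟩ <;> rintro ⟨h₁, h₂, h₃, h₄, h₅⟩ <;> simp only at h₁ h₂ h₃ h₄ h₅
  · rcases lt_trichotomy x' v with hx' | rfl | hx'
    · exact hfree.not_tripleCrossing huv hf hg (by omega)
    · have := h.isGreatest_right.2 hg
      have := h.outermost hf
      omega
    · rcases le_or_gt x a with hx | hx
      · have := h.outermost hf
        exact hfree.not_tripleCrossing h.inner_mem hvw hg (by omega)
      · exact hfree.not_tripleCrossing h.inner_mem hf hg (by omega)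
  · have := h.le_of_lt_left hfree hf
    exact hfree.not_tripleCrossing hf huv hg (by omega)
  · have := h.le_of_lt_left hfree hg
    exact hfree.not_tripleCrossing hf hg huv (by omega)

end IsStarCandidate

theorem IsTriangulation.right_le_of_long_edge {p x y : ℤ} (hT : IsTriangulation n 2 T) (hn : 1 ≤ n)
    (hp : (p, p + 2 * n) ∈ T) (hxy : (x, y) ∈ T) (hpx : p < x) (hxp : x < p + n) :
    y ≤ p + 2 * n := by
  by_contra! hy
  have := hT.length_le_two_mul hn hxy
  exact hT.crossingFree_three.not_tripleCrossing hp hxy (hT.2.1.add_mul_mem hp 1) (by omega)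

theorem IsTriangulation.le_left_of_long_edge {p x y : ℤ} (hT : IsTriangulation n 2 T) (hn : 1 ≤ n)
    (hp : (p, p + 2 * n) ∈ T) (hxy : (x, y) ∈ T) (hpy : p < y) (hyp : y < p + n) :
    p - n ≤ x := by
  by_contra! hx
  have := hT.length_le_two_mul hn hxy
  exact hT.crossingFree_three.not_tripleCrossing (hT.2.1.add_mul_mem hp (-2)) hxy
    (hT.2.1.add_mul_mem hp (-1)) (by omega)

namespace IsStarCandidate

variable {u a v b w p x y : ℤ}

theorem inner_right_le (h : IsStarCandidate T u a v b w) (hT : IsTriangulation n 2 T) (hn : 1 ≤ n)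
    (hp : (p, p + 2 * n) ∈ T) (hpv : p < v) (hvp : v < p + n) : b ≤ p + n := by
  by_contra! hb
  have := hT.right_le_of_long_edge hn hp h.isGreatest_right.1 hpv hvp
  have := h.ordered
  exact hT.crossingFree_three.not_tripleCrossing h.inner_mem h.isGreatest_right.1
    (hT.2.1.add_mul_mem hp 1) (by omega)

/-- The edge `[x, y]` cannot separate `[u, b]` from its translate: up to the long edge through `p`,
compatibility of `[u, b]` confines `[x, y]` to end before `p + n`, and then `[u + n, v + n]`
completes a 3-crossing with edges of the candidate. -/
theorem not_tripleCrossing_between (h : IsStarCandidate T u a v b w)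
    (hT : IsTriangulation n 2 T) (hn : 1 ≤ n) (hp : (p, p + 2 * n) ∈ T) (hpv : p < v)
    (hvp : v < p + n) (hxy : (x, y) ∈ T) :
    ¬ TripleCrossing (u, b) (x, y) (u + n, b + n) := by
  have hfree := hT.crossingFree_three
  have hb := h.inner_right_le hT hn hp hpv hvp
  have huv := h.isLeast_left.1
  have hvw := h.isGreatest_right.1
  have huv_next := hT.2.1.add_mul_mem huv 1
  have := h.ordered
  rintro ⟨h₁, h₂, h₃, h₄, h₅⟩
  simp only at h₁ h₂ h₃ h₄ h₅
  have hy : y ≤ p + n := by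
    by_contra! hy
    exact (h.compatible_left hfree _ (hT.2.1.add_mul_mem hxy (-1)) _ hp).2.1 (by omega)
  have houter := h.outermost hxy h₁
  rcases lt_trichotomy (u + n) v with hlt | heq | hlt
  · exact hfree.not_tripleCrossing huv hxy huv_next (by omega)
  · have := h.isGreatest_right.2 (show (v, v + n) ∈ T by simpa [heq] using huv_next)
    omega
  · rcases le_or_gt x a with hx | hx
    · exact hfree.not_tripleCrossing h.inner_mem hvw huv_next (by omega)
    · exact hfree.not_tripleCrossing h.inner_mem hxy huv_next (by omega)

theorem left_inner_mem (h : IsStarCandidate T u a v b w) (hT : IsTriangulation n 2 T) (hn : 1 ≤ n)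
    (hp : (p, p + 2 * n) ∈ T) (hpv : p < v) (hvp : v < p + n) : (u, b) ∈ T := by
  have hcomp := h.compatible_left hT.crossingFree_three
  have hu := hT.le_left_of_long_edge hn hp h.isLeast_left.1 hpv hvp
  have hb := h.inner_right_le hT hn hp hpv hvp
  have := h.ordered
  refine hT.mem_of_compatible (by omega) (by omega) hcomp ?_
  rintro ⟨x, y⟩ hxy
  refine ⟨h.not_tripleCrossing_between hT hn hp hpv hvp hxy, fun hcross => ?_, fun hcross => ?_⟩
  · exact (hcomp _ hxy _ hp).2.1 (by omega)
  · have := hT.right_le_of_long_edge hn hp hxy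
    exact (hcomp _ (hT.2.1.add_mul_mem hxy (-1)) _ hp).1 (by omega)

theorem inner_right_mem (h : IsStarCandidate T u a v b w) (hT : IsTriangulation n 2 T)
    (hn : 1 ≤ n) (hp : (p, p + 2 * n) ∈ T) (hpv : p < v) (hvp : v < p + n) : (a, w) ∈ T := by
  have hp' : (-p - n, -p - n + 2 * n) ∈ reflect ⁻¹' T := by
    simp only [Set.mem_preimage, reflect]
    convert hT.2.1.add_mul_mem hp (-1) using 2 <;> ring
  have := h.preimage_reflect.left_inner_mem hT.preimage_reflect hn hp' (by omega) (by omega)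
  simpa [reflect] using this

end IsStarCandidate

/-! ### Stars and their orbits -/

theorem edgeMem_iff_of_lt {a b : ℤ} (hT : ValidEdges T) (hab : a < b) :
    EdgeMem T a b ↔ (a, b) ∈ T :=
  or_iff_left fun hba => hab.not_gt (hT _ hba)

theorem mem_starsIn_iff {z : Fin 5 → ℤ} (hT : ValidEdges T) :
    z ∈ StarsIn T ↔ (z 0 < z 1 ∧ z 1 < z 2 ∧ z 2 < z 3 ∧ z 3 < z 4) ∧
      (z 0, z 2) ∈ T ∧ (z 1, z 3) ∈ T ∧ (z 2, z 4) ∈ T ∧ (z 0, z 3) ∈ T ∧ (z 1, z 4) ∈ T := by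
  have hmono : StrictMono z ↔ z 0 < z 1 ∧ z 1 < z 2 ∧ z 2 < z 3 ∧ z 3 < z 4 := by
    simp [Fin.strictMono_iff_lt_succ, Fin.forall_fin_succ]
  simp only [StarsIn, Set.mem_ofPred_eq, hmono]
  refine and_congr_right fun hz => ?_
  have hcomm : ∀ a b, EdgeMem T a b ↔ EdgeMem T b a := fun a b => or_comm
  rw [← edgeMem_iff_of_lt hT (show z 0 < z 2 by omega),
    ← edgeMem_iff_of_lt hT (show z 1 < z 3 by omega),
    ← edgeMem_iff_of_lt hT (show z 2 < z 4 by omega),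
    ← edgeMem_iff_of_lt hT (show z 0 < z 3 by omega),
    ← edgeMem_iff_of_lt hT (show z 1 < z 4 by omega), hcomm (z 0) (z 3), hcomm (z 1) (z 4)]
  simp [Fin.forall_fin_succ]

theorem add_mul_mem_starsIn {z : Fin 5 → ℤ} (hT : Periodic n T) (hz : z ∈ StarsIn T) (t : ℤ) :
    (fun i => z i + t * n) ∈ StarsIn T :=
  ⟨fun _ _ hij => Int.add_lt_add_right (hz.1 hij) _, fun i =>
    (hz.2 i).imp (fun h => hT.add_mul_mem h t) (fun h => hT.add_mul_mem h t)⟩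

section MiddleVertex

variable {y z : Fin 5 → ℤ}

theorem outer_le_of_mid_eq (hT : ValidEdges T) (hfree : CrossingFree 3 T) (hy : y ∈ StarsIn T)
    (hz : z ∈ StarsIn T) (hmid : y 2 = z 2) : y 0 ≤ z 0 ∧ z 4 ≤ y 4 := by
  obtain ⟨_, -, -, -, hy03, hy14⟩ := (mem_starsIn_iff hT).1 hy
  obtain ⟨_, hz02, -, hz24, -, -⟩ := (mem_starsIn_iff hT).1 hz
  have := hfree.not_tripleCrossing hz02 hy03 hy14
  have := hfree.not_tripleCrossing hy03 hy14 hz24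
  omega

theorem inner_le_of_mid_eq (hT : ValidEdges T) (hfree : CrossingFree 3 T) (hy : y ∈ StarsIn T)
    (hz : z ∈ StarsIn T) (hmid : y 2 = z 2) : z 1 ≤ y 1 ∧ y 3 ≤ z 3 := by
  have := outer_le_of_mid_eq hT hfree hy hz hmid
  obtain ⟨_, hy02, hy13, hy24, -, -⟩ := (mem_starsIn_iff hT).1 hy
  obtain ⟨_, -, -, -, hz03, hz14⟩ := (mem_starsIn_iff hT).1 hz
  have := outer_le_of_mid_eq hT hfree hz hy hmid.symm
  have := hfree.not_tripleCrossing hy02 hy13 hz14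
  have := hfree.not_tripleCrossing hz03 hy13 hy24
  omega

theorem eq_of_mid_eq (hT : ValidEdges T) (hfree : CrossingFree 3 T) (hy : y ∈ StarsIn T)
    (hz : z ∈ StarsIn T) (hmid : y 2 = z 2) : y = z := by
  have houter := outer_le_of_mid_eq hT hfree hy hz hmid
  have houter' := outer_le_of_mid_eq hT hfree hz hy hmid.symm
  have hinner := inner_le_of_mid_eq hT hfree hy hz hmid
  have hinner' := inner_le_of_mid_eq hT hfree hz hy hmid.symm
  funext i
  fin_cases i <;> simp only [Fin.reduceFinMk, Fin.isValue] <;> omega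

theorem mid_ne_of_long_edge {p : ℤ} (hT : IsTriangulation n 2 T) (hn : 1 ≤ n)
    (hp : (p, p + 2 * n) ∈ T) (hz : z ∈ StarsIn T) : z 2 ≠ p := by
  rintro rfl
  obtain ⟨_, -, -, -, hz03, hz14⟩ := (mem_starsIn_iff hT.1).1 hz
  have := hT.length_le_two_mul hn hz03
  exact hT.crossingFree_three.not_tripleCrossing (hT.2.1.add_mul_mem hp (-2)) hz03 hz14 (by omega)

theorem exists_mem_starsIn {p v : ℤ} (hT : IsTriangulation n 2 T) (hn : 1 ≤ n)
    (hp : (p, p + 2 * n) ∈ T) (hpv : p < v) (hvp : v < p + n) : ∃ z ∈ StarsIn T, z 2 = v := by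
  obtain ⟨u, a, b, w, h⟩ := hT.exists_isStarCandidate hn v
  exact ⟨![u, a, v, b, w], (mem_starsIn_iff hT.1).2 ⟨h.ordered, h.isLeast_left.1, h.inner_mem,
    h.isGreatest_right.1, h.left_inner_mem hT hn hp hpv hvp,
    h.inner_right_mem hT hn hp hpv hvp⟩, rfl⟩

theorem intCast_zmod_eq_iff_exists {x y : ℤ} :
    (x : ZMod n) = y ↔ ∃ t : ℤ, y = x + t * n := by
  rw [ZMod.intCast_eq_intCast_iff_dvd_sub]
  constructor
  · rintro ⟨t, ht⟩
    exact ⟨t, by linarith⟩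
  · rintro ⟨t, rfl⟩
    exact ⟨t, by ring⟩

theorem image_mid_starsIn {p : ℤ} (hT : IsTriangulation n 2 T) (hn : 1 ≤ n)
    (hp : (p, p + 2 * n) ∈ T) :
    (fun z : Fin 5 → ℤ => (z 2 : ZMod n)) '' StarsIn T = {(p : ZMod n)}ᶜ := by
  have : NeZero n := ⟨by omega⟩
  ext r
  constructor
  · rintro ⟨z, hz, rfl⟩ heq
    obtain ⟨t, ht⟩ := intCast_zmod_eq_iff_exists.1 heq
    exact mid_ne_of_long_edge hT hn hp (add_mul_mem_starsIn hT.2.1 hz t) ht.symm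
  · intro hr
    have hpos : 0 < (r - p).val := Nat.pos_of_ne_zero fun h =>
      hr (sub_eq_zero.1 ((ZMod.val_eq_zero _).1 h))
    have hlt : (r - p).val < n := ZMod.val_lt _
    obtain ⟨z, hz, hmid⟩ := exists_mem_starsIn (v := p + (r - p).val) hT hn hp
      (by omega) (by omega)
    exact ⟨z, hz, by simp [hmid]⟩

theorem self_mem_starOrbit (n : ℕ) (z : Fin 5 → ℤ) : z ∈ starOrbit n z := ⟨0, by simp⟩

theorem starOrbit_add_mul (n : ℕ) (z : Fin 5 → ℤ) (t : ℤ) :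
    starOrbit n (fun i => z i + t * n) = starOrbit n z := by
  ext w
  constructor
  · rintro ⟨s, rfl⟩
    exact ⟨t + s, by funext i; ring⟩
  · rintro ⟨s, rfl⟩
    exact ⟨s - t, by funext i; ring⟩

theorem starOrbit_eq_iff_mid (hT : IsTriangulation n 2 T) (hy : y ∈ StarsIn T)
    (hz : z ∈ StarsIn T) : starOrbit n y = starOrbit n z ↔ (y 2 : ZMod n) = z 2 := by
  rw [intCast_zmod_eq_iff_exists]
  constructor
  · intro h
    obtain ⟨t, ht⟩ : z ∈ starOrbit n y := h ▸ self_mem_starOrbit n z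
    exact ⟨t, congrFun ht 2⟩
  · rintro ⟨t, ht⟩
    rw [← starOrbit_add_mul n y t, eq_of_mid_eq hT.1 hT.crossingFree_three
      (add_mul_mem_starsIn hT.2.1 hy t) hz ht.symm]

end MiddleVertex

theorem ncard_image_eq_ncard_image {α β γ : Type*} {s : Set α} {f : α → β} {g : α → γ}
    (h : ∀ x ∈ s, ∀ y ∈ s, f x = f y ↔ g x = g y) : (f '' s).ncard = (g '' s).ncard := by
  have key (b : β) (hb : b ∈ f '' s) : ∃ x ∈ s, f x = b := hb
  choose r hrs hr using key
  refine Set.ncard_congr (fun b hb => g (r b hb)) ?_ ?_ ?_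
  · exact fun b hb => Set.mem_image_of_mem g (hrs b hb)
  · intro b c hb hc hbc
    rw [← hr b hb, ← hr c hc]
    exact (h _ (hrs b hb) _ (hrs c hc)).2 hbc
  · rintro _ ⟨x, hx, rfl⟩
    have hfx := Set.mem_image_of_mem f hx
    exact ⟨f x, hfx, (h _ (hrs _ hfx) x hx).1 (hr _ hfx)⟩

/-- For an `n`-periodic 2-triangulation `T` on `ℤ`, the set of
2-stars contained in `T` is invariant under translation by `n`, and the number
of its orbits under translation by `n` is exactly `n − 1`. -/
theorem star_orbit_count (n : ℕ) (hn : 1 ≤ n)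
    (T : Set Edge) (hT : IsTriangulation n 2 T) :
    (∀ z : Fin 5 → ℤ, z ∈ StarsIn T ↔ (fun i => z i + (n : ℤ)) ∈ StarsIn T) ∧
    ((starOrbit n) '' StarsIn T).ncard = n - 1 := by
  have hper := hT.2.1
  refine ⟨fun z => ⟨fun hz => ?_, fun hz => ?_⟩, ?_⟩
  · simpa using add_mul_mem_starsIn hper hz 1
  · simpa using add_mul_mem_starsIn hper hz (-1)
  · have : NeZero n := ⟨by omega⟩
    obtain ⟨p, hp⟩ := hT.exists_long_edge hn
    calc ((starOrbit n) '' StarsIn T).ncard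
        = ((fun z : Fin 5 → ℤ => (z 2 : ZMod n)) '' StarsIn T).ncard :=
          ncard_image_eq_ncard_image fun y hy z hz => starOrbit_eq_iff_mid hT hy hz
      _ = ({(p : ZMod n)}ᶜ : Set (ZMod n)).ncard := by rw [image_mid_starsIn hT hn hp]
      _ = n - 1 := by rw [Set.ncard_compl, Nat.card_zmod, Set.ncard_singleton]

end Multitriangulation
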